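/- Let α, β, γ, δ be real numbers with γ > 1 and δ > 0, and let ℓ ≥ 2 be an integer. Then there exists a constant C > 0, depending only on α, β, γ, δ and ℓ, such that for every integer n > ℓ: Σ_{p=1}^{n−ℓ} p^α (√n − √p)^β e^{−δ(√p + √γ(√n − √(p+1)))²} ≤ C n^{α−β/2} e^{−δ n}. -/

import Mathlib

open MeasureTheory Real Set Filter Metric

noncomputable section

abbrev Euc (N : ℕ) := EuclideanSpace ℝ (Fin N)

/-- Spatial Laplacian of `f : ℝ^N → ℝ`. -/
def lapl {N : ℕ} (f : Euc N → ℝ) (x : Euc N) : ℝ :=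
  ∑ i : Fin N,
    fderiv ℝ (fun y => fderiv ℝ f y (EuclideanSpace.single i 1)) x (EuclideanSpace.single i 1)

/-- The capacity `C_{2/q,q'}` of a set `A ⊆ ℝ^N`. -/
def capQ (N : ℕ) (q : ℝ) (A : Set (Euc N)) : ℝ :=
  sInf { c : ℝ | ∃ φ : Euc N → ℝ, ContDiff ℝ (⊤ : ℕ∞) φ ∧ HasCompactSupport φ ∧
      (∃ U : Set (Euc N), IsOpen U ∧ A ⊆ U ∧ ∀ x ∈ U, 1 ≤ φ x) ∧
      c = (∫ x, φ x ^ (q / (q - 1))) +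
          ∫ x, ∫ y, |φ x - φ y| ^ (q / (q - 1)) / ‖x - y‖ ^ ((N : ℝ) + 2 / (q - 1)) }

/-- The spherical shell piece `F_n` of `F` around `x` at time `t`. -/
def shell (N : ℕ) (F : Set (Euc N)) (x : Euc N) (t : ℝ) (n : ℕ) : Set (Euc N) :=
  {y | y ∈ F ∧ Real.sqrt ((n : ℝ) * t) ≤ dist x y ∧ dist x y ≤ Real.sqrt (((n : ℝ) + 1) * t)}

/-- The parabolic capacitary potential `W_F`. -/
def Wpot (N : ℕ) (q : ℝ) (F : Set (Euc N)) (x : Euc N) (t : ℝ) : ℝ :=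
  t ^ (-(N : ℝ) / 2) *
    ∑' n : ℕ,
      Real.sqrt (((n : ℝ) + 1) * t) ^ ((N : ℝ) - 2 / (q - 1)) * Real.exp (-(n : ℝ) / 4) *
        capQ N q ((fun y => (Real.sqrt (((n : ℝ) + 1) * t))⁻¹ • y) '' shell N F x t n)

/-- `u` is a positive solution of `∂ₜu - Δu + u^q = 0` in `Q_∞` whose initial
trace vanishes outside the closed set `F`. -/
def IsSol (N : ℕ) (q : ℝ) (u : Euc N → ℝ → ℝ) (F : Set (Euc N)) : Prop :=
  ContDiffOn ℝ 2 (fun p : Euc N × ℝ => u p.1 p.2) (Set.univ ×ˢ Set.Ioi (0 : ℝ)) ∧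
  (∀ x t, 0 < t → 0 < u x t) ∧
  (∀ x t, 0 < t → deriv (u x) t - lapl (fun y => u y t) x + u x t ^ q = 0) ∧
  (∀ E : Set (Euc N), IsCompact E → E ⊆ Fᶜ →
    Tendsto (fun t => sSup ((fun x => u x t) '' E)) (nhdsWithin 0 (Set.Ioi 0)) (nhds 0))

/-- The heat potential of a function. -/
def heatPot (N : ℕ) (η : Euc N → ℝ) (x : Euc N) (t : ℝ) : ℝ :=
  ∫ y, (4 * π * t) ^ (-(N : ℝ) / 2) * Real.exp (-‖x - y‖ ^ 2 / (4 * t)) * η y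

/-- The heat potential of a measure. -/
def heatPotM (N : ℕ) (μ : Measure (Euc N)) (x : Euc N) (t : ℝ) : ℝ :=
  ∫ y, (4 * π * t) ^ (-(N : ℝ) / 2) * Real.exp (-‖x - y‖ ^ 2 / (4 * t)) ∂μ

/-- The class `𝒯_{r,ρ}(K)` of test functions. -/
def TestFun (N : ℕ) (r ρ : ℝ) (K : Set (Euc N)) (η : Euc N → ℝ) : Prop :=
  ContDiff ℝ (⊤ : ℕ∞) η ∧ HasCompactSupport η ∧ tsupport η ⊆ Metric.ball (0 : Euc N) (r + ρ) ∧
  (∀ x, 0 ≤ η x ∧ η x ≤ 1) ∧ (∀ x ∈ K, η x = 1)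

/-- `‖R[η]‖_{L^{q'}}^{q'} = ∬_{Q_∞} (|∇ℍ[η]|² + |∂ₜℍ[η]|)^{q'} dx dt`. -/
def Rnorm (N : ℕ) (q : ℝ) (η : Euc N → ℝ) : ℝ :=
  ∫ t in Set.Ioi (0 : ℝ), ∫ x,
    (‖fderiv ℝ (fun y => heatPot N η y t) x‖ ^ 2 +
      |deriv (fun τ => heatPot N η x τ) t|) ^ (q / (q - 1))

/-- Key quadratic inequality. -/
lemma aux_quad (s a b N k : ℝ) (hs : 1 < s) (ha : 1 ≤ a) (hb : 0 ≤ b) (hN : 0 ≤ N)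
    (hab : b ^ 2 = a ^ 2 + 1) (hNk : N ^ 2 = a ^ 2 + k) (hk : 2 ≤ k) :
    N ^ 2 + (s - 1) / 4 * k - ((s - 1) / 2 + 1 + (1 + s) ^ 2 / (4 * (s - 1)))
      ≤ (a + s * (N - b)) ^ 2 := by
  have hba : a ≤ b := by nlinarith
  have hNb : b ≤ N := by nlinarith
  have h1 : (k - 1) / 2 ≤ (N - b) * N := by nlinarith
  have hE : 0 ≤ a + s * (N - b) := by
    have : 0 ≤ s * (N - b) := mul_nonneg (by linarith) (by linarith)
    linarith
  have h2 : (k - 1) / 2 ≤ (N - b) * (a + s * (N - b) + N) := by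
    have : 0 ≤ (N - b) * (a + s * (N - b)) := mul_nonneg (by linarith) hE
    nlinarith
  have hd : (b - a) * (2 * a) ≤ 1 := by nlinarith [sq_nonneg (b - a)]
  have hd2 : b - a ≤ 1 / 2 := by nlinarith
  have hu : (N - a) ^ 2 ≤ k := by nlinarith
  have h3 : (b - a) * (a + s * (N - b) + N) ≤ 1 + (1 + s) / 2 * (N - a) := by
    have e1 : a + s * (N - b) + N ≤ 2 * a + (1 + s) * (N - a) := by nlinarith
    have e2 : (b - a) * (a + s * (N - b) + N) ≤ (b - a) * (2 * a + (1 + s) * (N - a)) :=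
      mul_le_mul_of_nonneg_left e1 (by linarith)
    have e3 : (b - a) * ((1 + s) * (N - a)) ≤ 1 / 2 * ((1 + s) * (N - a)) :=
      mul_le_mul_of_nonneg_right hd2 (mul_nonneg (by linarith) (by linarith))
    nlinarith
  have h4 : (1 + s) / 2 * (N - a) ≤ (s - 1) / 4 * (N - a) ^ 2 + (1 + s) ^ 2 / (4 * (s - 1)) := by
    have hs' : 0 < s - 1 := by linarith
    have : (s - 1) / 4 * (N - a) ^ 2 + (1 + s) ^ 2 / (4 * (s - 1)) - (1 + s) / 2 * (N - a)
        = ((s - 1) * (N - a) - (1 + s)) ^ 2 / (4 * (s - 1)) := by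
      field_simp
      ring
    have h0 : 0 ≤ ((s - 1) * (N - a) - (1 + s)) ^ 2 / (4 * (s - 1)) := by positivity
    linarith
  have h5 : (s - 1) / 4 * (N - a) ^ 2 ≤ (s - 1) / 4 * k :=
    mul_le_mul_of_nonneg_left hu (by linarith)
  have h6 : (s - 1) * ((k - 1) / 2) ≤ (s - 1) * ((N - b) * (a + s * (N - b) + N)) :=
    mul_le_mul_of_nonneg_left h2 (by linarith)
  have h7 : (a + s * (N - b)) ^ 2 = N ^ 2 + (s - 1) * ((N - b) * (a + s * (N - b) + N))
      - (b - a) * (a + s * (N - b) + N) := by ring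
  rw [h7]
  linarith

lemma aux_rpow (x y : ℝ) (e : ℝ) (hx : 1 ≤ x) (hxy : x ≤ y) : x ^ e ≤ y ^ |e| :=
  (Real.rpow_le_rpow_of_exponent_le hx (le_abs_self e)).trans
    (Real.rpow_le_rpow (by linarith) hxy (abs_nonneg e))

lemma aux_alpha (α p k : ℝ) (hp : 1 ≤ p) (hk : 0 ≤ k) :
    p ^ α ≤ (p + k) ^ α * (1 + k) ^ |α| := by
  have h : p ^ α = (p + k) ^ α * ((p + k) / p) ^ (-α) := by
    rw [Real.rpow_neg (by positivity), Real.div_rpow (by positivity) (by positivity)]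
    have : (p + k) ^ α ≠ 0 := (Real.rpow_pos_of_pos (by linarith) _).ne'
    field_simp
  rw [h]
  have h1 : ((p + k) / p) ^ (-α) ≤ (1 + k) ^ |(-α)| := by
    apply aux_rpow
    · rw [le_div_iff₀ (by linarith)]; linarith
    · rw [div_le_iff₀ (by linarith)]; nlinarith
  rw [abs_neg] at h1
  exact mul_le_mul_of_nonneg_left h1 (Real.rpow_nonneg (by linarith) _)

lemma aux_beta (β a N k : ℝ) (ha : 1 ≤ a) (hN : 0 ≤ N) (hNk : N ^ 2 = a ^ 2 + k) (hk : 2 ≤ k) :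
    (N - a) ^ β ≤ (N ^ 2) ^ (-(β / 2)) * (1 + k) ^ |β| := by
  have hNa : a < N := by nlinarith
  have hN0 : 0 < N := by linarith
  have e : (N ^ 2) ^ (-(β / 2)) = N ^ (-β) := by
    rw [← Real.rpow_natCast N 2, ← Real.rpow_mul hN]
    congr 1; push_cast; ring
  have h : (N - a) ^ β = N ^ (-β) * (N * (N - a)) ^ β := by
    rw [Real.mul_rpow hN (by linarith), ← mul_assoc, ← Real.rpow_add hN0]
    simp
  rw [e, h]
  apply mul_le_mul_of_nonneg_left _ (Real.rpow_nonneg hN _)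
  apply aux_rpow
  · nlinarith
  · nlinarith

/-- Lemma A.2: discrete Gaussian summation estimate. -/
theorem stmt18 (α β γ δ : ℝ) (hγ : 1 < γ) (hδ : 0 < δ) (ℓ : ℕ) (hℓ : 2 ≤ ℓ) :
    ∃ C : ℝ, 0 < C ∧
      ∀ n : ℕ, ℓ < n →
        (∑ p ∈ Finset.Icc 1 (n - ℓ),
            (p : ℝ) ^ α * (Real.sqrt n - Real.sqrt p) ^ β *
              Real.exp
                (-δ * (Real.sqrt p + Real.sqrt γ * (Real.sqrt n - Real.sqrt ((p : ℝ) + 1))) ^ 2)) ≤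
          C * (n : ℝ) ^ (α - β / 2) * Real.exp (-δ * n) := by
  have hs : 1 < Real.sqrt γ := by
    rw [Real.lt_sqrt (by norm_num)]; simpa using hγ
  set s := Real.sqrt γ with hsdef
  set D : ℝ := (s - 1) / 2 + 1 + (1 + s) ^ 2 / (4 * (s - 1)) with hD
  set r : ℝ := δ * ((s - 1) / 4) with hr
  have hr0 : 0 < r := mul_pos hδ (by linarith)
  obtain ⟨M, hM⟩ := exists_nat_ge (|α| + |β|)
  let g : ℕ → ℝ := fun k => ((k + 1 : ℕ) : ℝ) ^ M * Real.exp (-r * ((k + 1 : ℕ) : ℝ))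
  have hg : Summable g :=
    (summable_nat_add_iff 1).2 (Real.summable_pow_mul_exp_neg_nat_mul M hr0)
  have hg0 : ∀ k, 0 ≤ g k := fun k => by positivity
  have hT : 0 ≤ ∑' k, g k := tsum_nonneg hg0
  refine ⟨Real.exp (δ * D + r) * (∑' k, g k + 1), by positivity, ?_⟩
  intro n hn
  have hterm : ∀ p ∈ Finset.Icc 1 (n - ℓ),
      (p : ℝ) ^ α * (Real.sqrt n - Real.sqrt p) ^ β *
        Real.exp (-δ * (Real.sqrt p + s * (Real.sqrt n - Real.sqrt ((p : ℝ) + 1))) ^ 2)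
      ≤ (n : ℝ) ^ (α - β / 2) * Real.exp (-δ * n) * Real.exp (δ * D + r) * g (n - p) := by
    intro p hp
    rw [Finset.mem_Icc] at hp
    obtain ⟨k, hk⟩ : ∃ k, n = p + k := ⟨n - p, by omega⟩
    have hk2 : 2 ≤ k := by omega
    have hnp : n - p = k := by omega
    have hp1 : (1 : ℝ) ≤ p := by exact_mod_cast hp.1
    have hk2' : (2 : ℝ) ≤ k := by exact_mod_cast hk2
    have hnk : (n : ℝ) = p + k := by exact_mod_cast hk
    have hn0 : (0 : ℝ) < n := by linarith
    have sa : Real.sqrt p ^ 2 = p := Real.sq_sqrt (by linarith)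
    have sb : Real.sqrt ((p : ℝ) + 1) ^ 2 = p + 1 := Real.sq_sqrt (by linarith)
    have sn : Real.sqrt n ^ 2 = n := Real.sq_sqrt (by linarith)
    have ha1 : 1 ≤ Real.sqrt p := by rw [Real.one_le_sqrt]; exact hp1
    have hq := aux_quad s (Real.sqrt p) (Real.sqrt ((p : ℝ) + 1)) (Real.sqrt n) k hs ha1
      (Real.sqrt_nonneg _) (Real.sqrt_nonneg _) (by rw [sa, sb]) (by rw [sa, sn, hnk]) hk2'
    have hA := aux_alpha α p k hp1 (by linarith)
    have hB := aux_beta β (Real.sqrt p) (Real.sqrt n) k ha1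
      (Real.sqrt_nonneg _) (by rw [sa, sn, hnk]) hk2'
    rw [sn] at hq hB
    rw [← hnk] at hA
    rw [← hD] at hq
    have hpn : Real.sqrt p ≤ Real.sqrt n := Real.sqrt_le_sqrt (by linarith)
    have hE : Real.exp (-δ * (Real.sqrt p + s * (Real.sqrt n - Real.sqrt ((p : ℝ) + 1))) ^ 2)
        ≤ Real.exp (-δ * n) * Real.exp (δ * D + r) * Real.exp (-r * ((k + 1 : ℕ) : ℝ)) := by
      rw [← Real.exp_add, ← Real.exp_add]
      apply Real.exp_le_exp.2
      have := mul_le_mul_of_nonneg_left hq hδ.le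
      rw [hr]; push_cast
      linarith
    have hP : ((1 : ℝ) + k) ^ |α| * (1 + k) ^ |β| ≤ ((k + 1 : ℕ) : ℝ) ^ M := by
      rw [← Real.rpow_add (by linarith), ← Real.rpow_natCast]
      push_cast
      rw [add_comm (1 : ℝ)]
      exact Real.rpow_le_rpow_of_exponent_le (by linarith) hM
    have hnn : (n : ℝ) ^ (α - β / 2) = (n : ℝ) ^ α * (n : ℝ) ^ (-(β / 2)) := by
      rw [← Real.rpow_add hn0]; congr 1
    rw [hnp]
    have hAB : (p : ℝ) ^ α * (Real.sqrt n - Real.sqrt p) ^ β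
        ≤ (n : ℝ) ^ (α - β / 2) * ((k + 1 : ℕ) : ℝ) ^ M := by
      calc _ ≤ ((n : ℝ) ^ α * (1 + k) ^ |α|) * ((n : ℝ) ^ (-(β / 2)) * (1 + k) ^ |β|) :=
            mul_le_mul hA hB (Real.rpow_nonneg (by linarith) _) (by positivity)
        _ = (n : ℝ) ^ (α - β / 2) * (((1 : ℝ) + k) ^ |α| * (1 + k) ^ |β|) := by
            rw [hnn]; ring
        _ ≤ _ := mul_le_mul_of_nonneg_left hP (by positivity)
    calc _ ≤ ((n : ℝ) ^ (α - β / 2) * ((k + 1 : ℕ) : ℝ) ^ M) *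
          (Real.exp (-δ * n) * Real.exp (δ * D + r) * Real.exp (-r * ((k + 1 : ℕ) : ℝ))) :=
          mul_le_mul hAB hE (Real.exp_pos _).le (by positivity)
      _ = _ := by simp only [g]; ring
  have hsum : ∑ p ∈ Finset.Icc 1 (n - ℓ), g (n - p) ≤ ∑' k, g k := by
    rw [← Finset.sum_image (f := g) (g := fun p => n - p)]
    · exact hg.sum_le_tsum _ (fun k _ => hg0 k)
    · intro x hx y hy hxy
      simp only [Finset.coe_Icc, Set.mem_Icc] at hx hy hxy
      omega
  calc _ ≤ ∑ p ∈ Finset.Icc 1 (n - ℓ),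
        (n : ℝ) ^ (α - β / 2) * Real.exp (-δ * n) * Real.exp (δ * D + r) * g (n - p) :=
        Finset.sum_le_sum hterm
    _ = (n : ℝ) ^ (α - β / 2) * Real.exp (-δ * n) * Real.exp (δ * D + r) *
        ∑ p ∈ Finset.Icc 1 (n - ℓ), g (n - p) := by rw [Finset.mul_sum]
    _ ≤ (n : ℝ) ^ (α - β / 2) * Real.exp (-δ * n) * Real.exp (δ * D + r) *
        (∑' k, g k + 1) := mul_le_mul_of_nonneg_left (by linarith) (by positivity)
    _ = _ := by ring

end
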